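/- There exists a non-degenerate linear code C' over F_3 of length 32 and dimension 3 that is an MWS code (i.e., |S(C')| = q_3 = 13) with minimum distance d = 10 and spread Δ(C') = 50; in particular C' is an MWS code that is not strictly compact. -/

import Mathlib

open scoped Classical
open Finset

/-- `qk q k = (q^k - 1)/(q - 1)`, the number of nonzero weights an MWS code of dimension `k`
over a field with `q` elements has. -/
def qk (q k : ℕ) : ℕ := (q ^ k - 1) / (q - 1)

/-- The set of nonzero Hamming weights of a linear code `C ⊆ F^n`. -/
noncomputable def weightSet {F : Type*} [Field F] [Fintype F] {n : ℕ}
    (C : Submodule F (Fin n → F)) : Finset ℕ :=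
  Finset.image (fun c => hammingNorm c)
    (Finset.univ.filter fun c : Fin n → F => c ∈ C ∧ c ≠ 0)

/-- A code is non-degenerate if no coordinate is identically zero. -/
def Nondeg {F : Type*} [Field F] {n : ℕ} (C : Submodule F (Fin n → F)) : Prop :=
  ∀ i : Fin n, ∃ c ∈ C, c i ≠ 0

/-- Maximum weight spectrum code of dimension `k`. -/
def IsMWS {F : Type*} [Field F] [Fintype F] {n : ℕ}
    (C : Submodule F (Fin n → F)) (k : ℕ) : Prop :=
  (weightSet C).card = qk (Fintype.card F) k

/-- The spread of an MWS code. -/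
noncomputable def spread {F : Type*} [Field F] [Fintype F] {n : ℕ}
    (C : Submodule F (Fin n → F)) (k : ℕ) : ℤ :=
  (n : ℤ) * qk (Fintype.card F) k
    - ((qk (Fintype.card F) k * (qk (Fintype.card F) k - 1)) / 2 : ℕ)
    - ∑ w ∈ weightSet C, (w : ℤ)

/-- A compact MWS code: the weight set is an interval of `q_k` consecutive integers starting
at the minimum distance. -/
def IsCompactMWS {F : Type*} [Field F] [Fintype F] {n : ℕ}
    (C : Submodule F (Fin n → F)) (k : ℕ) : Prop :=
  IsMWS C k ∧ ∃ d, d ∈ weightSet C ∧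
    weightSet C = Finset.Icc d (d + qk (Fintype.card F) k - 1)

/-- A strictly compact MWS code: a compact MWS code whose length is itself a weight. -/
def IsStrictlyCompactMWS {F : Type*} [Field F] [Fintype F] {n : ℕ}
    (C : Submodule F (Fin n → F)) (k : ℕ) : Prop :=
  IsCompactMWS C k ∧ n ∈ weightSet C

/-- A generator matrix: the columns `(0,1,2)`, `(1,0,0)`, `(1,0,1)`, `(1,0,2)`, `(1,1,0)`, `(1,1,1)`,
`(1,1,2)`, `(1,2,2)` occur with multiplicities `1, 1, 1, 6, 5, 2, 3, 13`. -/
def generatorMatrix : Matrix (Fin 3) (Fin 32) (ZMod 3) :=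
  ![![0, 1, 1, 1, 1, 1, 1, 1, 1, 1, 1, 1, 1, 1, 1, 1,
      1, 1, 1, 1, 1, 1, 1, 1, 1, 1, 1, 1, 1, 1, 1, 1],
    ![1, 0, 0, 0, 0, 0, 0, 0, 0, 1, 1, 1, 1, 1, 1, 1,
      1, 1, 1, 2, 2, 2, 2, 2, 2, 2, 2, 2, 2, 2, 2, 2],
    ![2, 0, 1, 2, 2, 2, 2, 2, 2, 0, 0, 0, 0, 0, 1, 1,
      2, 2, 2, 2, 2, 2, 2, 2, 2, 2, 2, 2, 2, 2, 2, 2]]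

/-- The weights of the code generated by `generatorMatrix`. -/
def generatorWeights : Finset ℕ := {10, 12, 16, 19, 21, 22, 23, 24, 26, 27, 28, 29, 31}

lemma card_generatorWeights : generatorWeights.card = 13 := rfl

lemma sum_generatorWeights : ∑ w ∈ generatorWeights, (w : ℤ) = 288 := rfl

lemma exists_generatorMatrix_ne_zero (i : Fin 32) : ∃ j, generatorMatrix j i ≠ 0 := by
  revert i
  decide +kernel

lemma image_hammingNorm_vecMul_generatorMatrix :
    (univ.filter fun v : Fin 3 → ZMod 3 => v ≠ 0).image
      (fun v => hammingNorm (Matrix.vecMul v generatorMatrix)) = generatorWeights := by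
  decide +kernel

lemma vecMulLinear_generatorMatrix_injective :
    Function.Injective generatorMatrix.vecMulLinear := by
  refine (injective_iff_map_eq_zero _).2 fun v hv => ?_
  by_contra hne
  have hmem : hammingNorm (Matrix.vecMul v generatorMatrix) ∈ generatorWeights :=
    image_hammingNorm_vecMul_generatorMatrix ▸
      mem_image_of_mem _ (mem_filter.2 ⟨mem_univ v, hne⟩)
  rw [Matrix.vecMulLinear_apply] at hv
  rw [hv, hammingNorm_zero] at hmem
  exact absurd hmem (by decide)

/-- The weights of the image of an injective linear map are the norms of the images of the
nonzero vectors. -/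
lemma weightSet_range {F V : Type*} [Field F] [Fintype F] [DecidableEq F] [AddCommGroup V]
    [Module F V] [Fintype V] [DecidableEq V] {n : ℕ} (f : V →ₗ[F] Fin n → F)
    (hf : Function.Injective f) :
    weightSet (LinearMap.range f) =
      (univ.filter fun v : V => v ≠ 0).image fun v => hammingNorm (f v) := by
  ext w
  simp only [weightSet, mem_image, mem_filter, mem_univ, true_and, LinearMap.mem_range]
  constructor
  · rintro ⟨_, ⟨⟨v, rfl⟩, hv⟩, rfl⟩
    refine ⟨v, fun h => hv (by rw [h, map_zero]), ?_⟩
    congr!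
  · rintro ⟨v, hv, rfl⟩
    refine ⟨f v, ⟨⟨v, rfl⟩, (map_ne_zero_iff f hf).2 hv⟩, ?_⟩
    congr!

lemma weightSet_range_generatorMatrix :
    weightSet (LinearMap.range generatorMatrix.vecMulLinear) = generatorWeights := by
  rw [weightSet_range _ vecMulLinear_generatorMatrix_injective]
  exact image_hammingNorm_vecMul_generatorMatrix

/-- There exists a non-degenerate $[32,3]_3$ MWS code $C'$ (so
$|S(C')| = q_3 = 13$) with minimum distance $d = 10$ and spread $Δ(C') = 50$; in
particular $C'$ is an MWS code which is not strictly compact. -/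
theorem stmt_18 :
    ∃ C : Submodule (ZMod 3) (Fin 32 → ZMod 3),
      Module.finrank (ZMod 3) C = 3 ∧
      Nondeg C ∧
      IsMWS C 3 ∧
      (weightSet C).card = 13 ∧
      (10 : ℕ) ∈ weightSet C ∧ (∀ w ∈ weightSet C, 10 ≤ w) ∧
      spread C 3 = 50 ∧
      ¬ IsStrictlyCompactMWS C 3 := by
  have hW := weightSet_range_generatorMatrix
  have hq : qk (Fintype.card (ZMod 3)) 3 = 13 := by rw [ZMod.card]; rfl
  refine ⟨LinearMap.range generatorMatrix.vecMulLinear, ?_, ?_, ?_, ?_, ?_, ?_, ?_, ?_⟩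
  · rw [LinearMap.finrank_range_of_inj vecMulLinear_generatorMatrix_injective,
      Module.finrank_fin_fun]
  · intro i
    obtain ⟨j, hj⟩ := exists_generatorMatrix_ne_zero i
    refine ⟨_, ⟨Pi.single j 1, rfl⟩, ?_⟩
    rwa [Matrix.vecMulLinear_apply, Matrix.single_one_vecMul]
  · rw [IsMWS, hW, hq, card_generatorWeights]
  · rw [hW, card_generatorWeights]
  · rw [hW]; decide
  · rw [hW]; decide
  · rw [spread, hW, hq, sum_generatorWeights]; norm_num
  · rw [IsStrictlyCompactMWS, hW]
    exact fun h => absurd h.2 (by decide)
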